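/- arXiv:2005.06384 — 2 statements merged into one kernel-verified Lean document; each statement's English description precedes it below -/
import Mathlib

section
/- Let a be a real number with a < 0. Then for every real x > 0, Γ(a,x) < e^(−x) x^a (1 − a + x)/((x−a)² − a + 2x) < x^a e^(−x)/(x−a). Moreover, the middle expression, as an upper bound on Γ(a,x), is exact both at 0 and at infinity: its ratio to Γ(a,x) tends to 1 as x → 0+ and as x → ∞. -/
/-!
Write `U` for the bound `gMid a` and `D` for its denominator `gMidDenom a`. Then
`U' = (1 + 2 (1 - a) x / D²) Γ(a, ·)'`. The factor exceeds `1` while `Γ(a, ·)' < 0`, so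
`U - Γ(a, ·)` is strictly decreasing; as it vanishes at infinity, it is positive. The factor tends
to `1` at infinity, so `U / Γ(a, ·) → 1` there by L'Hôpital's rule. At `0` both functions are
asymptotic to `-x ^ a / a`: for `Γ(a, x)`, substitute `t = x u` in the integral.
-/

open Real Filter Set

/-- Upper incomplete gamma function `Γ(a,x) = ∫_x^∞ t^(a-1) e^(-t) dt`. -/
noncomputable def incGamma (a x : ℝ) : ℝ := ∫ t in Set.Ioi x, t ^ (a - 1) * Real.exp (-t)

/-- `b_a = Γ(a+1)^(1/(a-1))` for `a ≠ 1`, and `b_1 = e^(1-γ)`. -/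
noncomputable def bCoef (a : ℝ) : ℝ :=
  if a = 1 then Real.exp (1 - Real.eulerMascheroniConstant)
  else Real.Gamma (a + 1) ^ (1 / (a - 1))

/-- `G_a(x) = ((x+b_a)^a - x^a) e^(-x) / (a b_a)`. -/
noncomputable def Gbound (a x : ℝ) : ℝ :=
  ((x + bCoef a) ^ a - x ^ a) * Real.exp (-x) / (a * bCoef a)

/-- `g_a(x) = (((x+2)^a - x^a - 2^a)/(2a) + Γ(a)) e^(-x)`. -/
noncomputable def gbound (a x : ℝ) : ℝ :=
  (((x + 2) ^ a - x ^ a - (2 : ℝ) ^ a) / (2 * a) + Real.Gamma a) * Real.exp (-x)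

/-- `g_a^lo(x) = x^a e^(-x) (x-a-1) / ((x-a)^2 + a)`. -/
noncomputable def gLo (a x : ℝ) : ℝ :=
  x ^ a * Real.exp (-x) * (x - a - 1) / ((x - a) ^ 2 + a)

/-- `g_a^hi(x) = x^a e^(-x) / (x-a)`. -/
noncomputable def gHi (a x : ℝ) : ℝ := x ^ a * Real.exp (-x) / (x - a)

open MeasureTheory Topology

theorem hasDerivAt_integral_Ioi {E : Type*} [NormedAddCommGroup E] [NormedSpace ℝ E]
    [CompleteSpace E] {f : ℝ → E} {b x : ℝ} (hf : IntegrableOn f (Ioi b)) (hbx : b < x)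
    (hfx : ContinuousAt f x) : HasDerivAt (fun y => ∫ t in Ioi y, f t) (-f x) x := by
  have hprimitive : HasDerivAt (fun y => ∫ t in b..y, f t) (f x) x :=
    intervalIntegral.integral_hasDerivAt_right
      ((intervalIntegrable_iff_integrableOn_Ioc_of_le hbx.le).2 (hf.mono_set Ioc_subset_Ioi_self))
      ⟨Ioi b, Ioi_mem_nhds hbx, hf.aestronglyMeasurable⟩ hfx
  refine (hprimitive.const_sub (∫ t in Ioi b, f t)).congr_of_eventuallyEq ?_
  filter_upwards [Ioi_mem_nhds hbx] with y hy
  rw [← intervalIntegral.integral_Ioi_sub_Ioi hf (le_of_lt hy), sub_sub_cancel]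

theorem pos_of_hasDerivAt_neg_of_tendsto_zero {f f' : ℝ → ℝ} {x : ℝ}
    (hderiv : ∀ t, x ≤ t → HasDerivAt f (f' t) t) (hneg : ∀ t, x < t → f' t < 0)
    (hlim : Tendsto f atTop (𝓝 0)) : 0 < f x := by
  have hanti : StrictAntiOn f (Ici x) := by
    refine strictAntiOn_of_deriv_neg (convex_Ici x)
      (fun t ht => (hderiv t ht).continuousAt.continuousWithinAt) fun t ht => ?_
    rw [interior_Ici] at ht
    rw [(hderiv t (le_of_lt ht)).deriv]
    exact hneg t ht
  have hx : x < x + 1 := lt_add_one x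
  calc
    0 ≤ f (x + 1) := by
      refine le_of_tendsto hlim ?_
      filter_upwards [eventually_ge_atTop (x + 1)] with t ht
      exact hanti.antitoneOn hx.le (hx.le.trans ht) ht
    _ < f x := hanti self_mem_Ici hx.le hx

theorem hasDerivAt_rpow_mul_exp_neg (a : ℝ) {x : ℝ} (hx : x ≠ 0) :
    HasDerivAt (fun t : ℝ => t ^ a * exp (-t)) ((a - x) * (x ^ (a - 1) * exp (-x))) x := by
  refine ((hasDerivAt_rpow_const (Or.inl hx)).mul (hasDerivAt_neg x).exp).congr_deriv ?_
  rw [← sub_add_cancel a 1, rpow_add_one hx]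
  simp only [add_sub_cancel_right]
  ring

theorem integrableOn_rpow_mul_exp_neg_Ioi (s : ℝ) {x : ℝ} (hx : 0 < x) :
    IntegrableOn (fun t : ℝ => t ^ s * exp (-t)) (Ioi x) := by
  refine integrable_of_isBigO_exp_neg one_half_pos (fun t ht => ?_) ?_
  · have ht0 : t ≠ 0 := (hx.trans_le ht).ne'
    exact (hasDerivAt_rpow_mul_exp_neg s ht0).continuousAt.continuousWithinAt
  · simpa only [mul_comm] using (Gamma_integrand_isLittleO s).isBigO

theorem hasDerivAt_incGamma (a : ℝ) {x : ℝ} (hx : 0 < x) :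
    HasDerivAt (incGamma a) (-(x ^ (a - 1) * exp (-x))) x :=
  hasDerivAt_integral_Ioi (integrableOn_rpow_mul_exp_neg_Ioi (a - 1) (half_pos hx))
    (half_lt_self hx) (hasDerivAt_rpow_mul_exp_neg (a - 1) hx.ne').continuousAt

theorem tendsto_incGamma_atTop (a : ℝ) : Tendsto (incGamma a) atTop (𝓝 0) :=
  tendsto_integral_Ioi_zero tendsto_id

theorem incGamma_eq_rpow_mul_integral (a : ℝ) {x : ℝ} (hx : 0 < x) :
    incGamma a x = x ^ a * ∫ u in Ioi 1, u ^ (a - 1) * exp (-(x * u)) := by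
  have hscale : ∀ u ∈ Ioi (1 : ℝ),
      (x * u) ^ (a - 1) * exp (-(x * u)) = x ^ (a - 1) * (u ^ (a - 1) * exp (-(x * u))) := by
    intro u hu
    rw [mul_rpow hx.le (zero_le_one.trans (le_of_lt hu)), mul_assoc]
  calc
    incGamma a x = x * ∫ u in Ioi 1, (x * u) ^ (a - 1) * exp (-(x * u)) := by
      rw [← smul_eq_mul, integral_comp_mul_left_Ioi' (fun t => t ^ (a - 1) * exp (-t)) 1 hx,
        mul_one, incGamma]
    _ = x * x ^ (a - 1) * ∫ u in Ioi 1, u ^ (a - 1) * exp (-(x * u)) := by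
      rw [setIntegral_congr_fun measurableSet_Ioi hscale, integral_const_mul, mul_assoc]
    _ = x ^ a * ∫ u in Ioi 1, u ^ (a - 1) * exp (-(x * u)) := by
      rw [mul_comm x, ← rpow_add_one hx.ne', sub_add_cancel]

theorem tendsto_integral_rpow_mul_exp_neg_mul_nhdsGT_zero {s : ℝ} (hs : s < -1) :
    Tendsto (fun x : ℝ => ∫ u in Ioi 1, u ^ s * exp (-(x * u))) (𝓝[>] 0)
      (𝓝 (∫ u in Ioi (1 : ℝ), u ^ s)) := by
  refine tendsto_integral_filter_of_dominated_convergence (fun u => u ^ s) ?_ ?_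
    (integrableOn_Ioi_rpow_of_lt hs one_pos) ?_
  · exact .of_forall fun x => (by fun_prop : Measurable _).aestronglyMeasurable
  · filter_upwards [self_mem_nhdsWithin] with x (hx : 0 < x)
    filter_upwards [ae_restrict_mem measurableSet_Ioi] with u (hu : 1 < u)
    have : 0 < u := one_pos.trans hu
    rw [norm_of_nonneg (by positivity)]
    exact mul_le_of_le_one_right (by positivity) (exp_le_one_iff.2 (by nlinarith))
  · refine .of_forall fun u => ?_
    have hcont : Continuous fun x : ℝ => u ^ s * exp (-(x * u)) := by fun_prop
    simpa using (hcont.tendsto 0).mono_left nhdsWithin_le_nhds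

theorem tendsto_incGamma_div_rpow_nhdsGT_zero {a : ℝ} (ha : a < 0) :
    Tendsto (fun x => incGamma a x / x ^ a) (𝓝[>] 0) (𝓝 (-1 / a)) := by
  have hintegral : ∫ u in Ioi (1 : ℝ), u ^ (a - 1) = -1 / a := by
    rw [integral_Ioi_rpow_of_lt (by linarith) one_pos, one_rpow, sub_add_cancel]
  rw [← hintegral]
  refine (tendsto_integral_rpow_mul_exp_neg_mul_nhdsGT_zero (by linarith)).congr' ?_
  filter_upwards [self_mem_nhdsWithin] with x (hx : 0 < x)
  rw [incGamma_eq_rpow_mul_integral a hx, mul_div_cancel_left₀ _ (rpow_pos_of_pos hx a).ne']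

/-- The denominator `(x - a)² - a + 2x` of the upper bound `gMid` for `Γ(a,x)`. -/
noncomputable def gMidDenom (a x : ℝ) : ℝ := (x - a) ^ 2 - a + 2 * x

/-- The upper bound `e^(-x) x^a (1 - a + x) / ((x - a)² - a + 2x)` for `Γ(a,x)`, which refines
`gHi`. -/
noncomputable def gMid (a x : ℝ) : ℝ := exp (-x) * x ^ a * (1 - a + x) / gMidDenom a x

section GMid

variable {a x : ℝ}

theorem gMidDenom_eq_sq_sub (a x : ℝ) : gMidDenom a x = (1 - a + x) ^ 2 - (1 - a) := by
  rw [gMidDenom]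
  ring

theorem gMidDenom_pos (ha : a ≤ 0) (hx : 0 < x) : 0 < gMidDenom a x := by
  rw [gMidDenom]
  linarith [sq_nonneg (x - a)]

theorem gMidDenom_le_gMidDenom {y : ℝ} (hx : 0 ≤ 1 - a + x) (hxy : x ≤ y) :
    gMidDenom a x ≤ gMidDenom a y := by
  rw [gMidDenom_eq_sq_sub, gMidDenom_eq_sq_sub]
  gcongr

theorem hasDerivAt_gMidDenom (a x : ℝ) : HasDerivAt (gMidDenom a) (2 * (1 - a + x)) x := by
  rw [funext (gMidDenom_eq_sq_sub a)]
  simpa using (((hasDerivAt_id x).const_add (1 - a)).pow 2).sub_const (1 - a)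

theorem tendsto_id_div_gMidDenom_atTop (a : ℝ) :
    Tendsto (fun x => x / gMidDenom a x) atTop (𝓝 0) := by
  have hratio : Tendsto (fun x => x + (2 * (1 - a) + (a ^ 2 - a) / x)) atTop atTop :=
    tendsto_id.atTop_add (tendsto_const_nhds.add (tendsto_id.const_div_atTop (a ^ 2 - a)))
  refine hratio.inv_tendsto_atTop.congr' ?_
  filter_upwards [eventually_ne_atTop 0] with x hx
  rw [Pi.inv_apply, ← inv_div, gMidDenom]
  field_simp
  ring

theorem tendsto_gMidDenom_atTop (a : ℝ) : Tendsto (gMidDenom a) atTop atTop := by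
  rw [funext (gMidDenom_eq_sq_sub a)]
  exact tendsto_atTop_add_const_right _ _ ((tendsto_pow_atTop two_ne_zero).comp
    (tendsto_atTop_add_const_left _ (1 - a) tendsto_id))

theorem gMid_lt_gHi (hx : 0 < x) (hax : a < x) (hD : 0 < gMidDenom a x) :
    gMid a x < gHi a x := by
  have hfactor : (1 - a + x) / gMidDenom a x < 1 / (x - a) := by
    rw [div_lt_div_iff₀ hD (sub_pos.2 hax), gMidDenom]
    linarith
  calc
    gMid a x = x ^ a * exp (-x) * ((1 - a + x) / gMidDenom a x) := by rw [gMid]; ring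
    _ < x ^ a * exp (-x) * (1 / (x - a)) := by gcongr
    _ = gHi a x := mul_one_div _ _

theorem hasDerivAt_gMid (hx : x ≠ 0) (hD : gMidDenom a x ≠ 0) :
    HasDerivAt (gMid a)
      ((1 + 2 * (1 - a) * x / gMidDenom a x ^ 2) * -(x ^ (a - 1) * exp (-x))) x := by
  have hnum : HasDerivAt (fun t => 1 - a + t) 1 x := (hasDerivAt_id x).const_add (1 - a)
  have hprod := (hasDerivAt_rpow_mul_exp_neg a hx).mul (hnum.div (hasDerivAt_gMidDenom a x) hD)
  have hgMid : gMid a = (fun t => t ^ a * exp (-t)) * ((fun t => 1 - a + t) / gMidDenom a) := by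
    funext t
    simp only [gMid, Pi.mul_apply, Pi.div_apply]
    ring
  rw [hgMid]
  refine hprod.congr_deriv ?_
  have hpow : x ^ a = x ^ (a - 1) * x := by rw [← rpow_add_one hx, sub_add_cancel]
  simp only [Pi.div_apply, hpow]
  have hdenom : gMidDenom a x = (x - a) ^ 2 - a + 2 * x := rfl
  field_simp
  linear_combination x ^ (a - 1) * (gMidDenom a x + 2 * x) * hdenom

theorem tendsto_gMid_atTop (a : ℝ) : Tendsto (gMid a) atTop (𝓝 0) := by
  have hexp : Tendsto (fun x : ℝ => x ^ a * exp (-x)) atTop (𝓝 0) := by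
    simpa using tendsto_rpow_mul_exp_neg_mul_atTop_nhds_zero a 1 one_pos
  have hrational := ((tendsto_gMidDenom_atTop a).inv_tendsto_atTop.const_mul (1 - a)).add
    (tendsto_id_div_gMidDenom_atTop a)
  have hprod := hexp.mul hrational
  rw [mul_zero, add_zero, mul_zero] at hprod
  refine hprod.congr fun x => ?_
  rw [gMid, Pi.inv_apply]
  ring

theorem tendsto_gMid_div_rpow_nhdsGT_zero (ha₀ : a ≠ 0) (ha₁ : a ≠ 1) :
    Tendsto (fun x => gMid a x / x ^ a) (𝓝[>] 0) (𝓝 (-1 / a)) := by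
  have ha : 1 - a ≠ 0 := sub_ne_zero.2 ha₁.symm
  have hD : gMidDenom a 0 = -a * (1 - a) := by rw [gMidDenom]; ring
  have hcont : ContinuousAt (fun x => exp (-x) * ((1 - a + x) / gMidDenom a x)) 0 :=
    ContinuousAt.mul (by fun_prop) (ContinuousAt.div (by fun_prop)
      (hasDerivAt_gMidDenom a 0).continuousAt (hD ▸ mul_ne_zero (neg_ne_zero.2 ha₀) ha))
  have hvalue : exp (-0) * ((1 - a + 0) / gMidDenom a 0) = -1 / a := by
    rw [hD, neg_zero, exp_zero]
    field_simp
    ring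
  rw [← hvalue]
  refine (hcont.tendsto.mono_left nhdsWithin_le_nhds).congr' ?_
  filter_upwards [self_mem_nhdsWithin] with x (hx : 0 < x)
  have hxa : x ^ a ≠ 0 := (rpow_pos_of_pos hx a).ne'
  rw [gMid]
  field_simp

theorem incGamma_lt_gMid (ha : a < 1) (hx : 0 < x) (hD : 0 < gMidDenom a x) :
    incGamma a x < gMid a x := by
  have hDpos : ∀ t, x ≤ t → 0 < gMidDenom a t := fun t ht =>
    hD.trans_le (gMidDenom_le_gMidDenom (by linarith) ht)
  have hlim : Tendsto (fun t => gMid a t - incGamma a t) atTop (𝓝 0) := by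
    simpa using (tendsto_gMid_atTop a).sub (tendsto_incGamma_atTop a)
  have hderiv : ∀ t, x ≤ t → HasDerivAt (fun t => gMid a t - incGamma a t)
      ((1 + 2 * (1 - a) * t / gMidDenom a t ^ 2) * -(t ^ (a - 1) * exp (-t))
        - -(t ^ (a - 1) * exp (-t))) t := fun t ht =>
    (hasDerivAt_gMid (hx.trans_le ht).ne' (hDpos t ht).ne').sub
      (hasDerivAt_incGamma a (hx.trans_le ht))
  suffices hneg : ∀ t, x < t →
      (1 + 2 * (1 - a) * t / gMidDenom a t ^ 2) * -(t ^ (a - 1) * exp (-t))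
        - -(t ^ (a - 1) * exp (-t)) < 0 from
    sub_pos.1 (pos_of_hasDerivAt_neg_of_tendsto_zero
      (f := fun t => gMid a t - incGamma a t) hderiv hneg hlim)
  intro t ht
  have ht₀ : 0 < t := hx.trans ht
  have hDt := hDpos t ht.le
  have : 0 < 1 - a := sub_pos.2 ha
  have hpos : 0 < 2 * (1 - a) * t / gMidDenom a t ^ 2 * (t ^ (a - 1) * exp (-t)) := by positivity
  linarith

theorem tendsto_gMid_div_incGamma_nhdsGT_zero (ha : a < 0) :
    Tendsto (fun x => gMid a x / incGamma a x) (𝓝[>] 0) (𝓝 1) := by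
  have hc : -1 / a ≠ 0 := div_ne_zero (neg_ne_zero.2 one_ne_zero) ha.ne
  have hratio := (tendsto_gMid_div_rpow_nhdsGT_zero ha.ne (by linarith)).div
    (tendsto_incGamma_div_rpow_nhdsGT_zero ha) hc
  rw [div_self hc] at hratio
  refine hratio.congr' ?_
  filter_upwards [self_mem_nhdsWithin] with x (hx : 0 < x)
  exact div_div_div_cancel_right₀ (rpow_pos_of_pos hx a).ne' _ _

theorem tendsto_gMid_div_incGamma_atTop (a : ℝ) :
    Tendsto (fun x => gMid a x / incGamma a x) atTop (𝓝 1) := by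
  have hfactor : Tendsto (fun x => 1 + 2 * (1 - a) * x / gMidDenom a x ^ 2) atTop (𝓝 1) := by
    have hprod := ((tendsto_id_div_gMidDenom_atTop a).mul
      (tendsto_gMidDenom_atTop a).inv_tendsto_atTop).const_mul (2 * (1 - a))
    rw [mul_zero, mul_zero] at hprod
    simpa using (hprod.congr fun x => by rw [Pi.inv_apply]; ring).const_add 1
  have hgMid : ∀ᶠ x in atTop, HasDerivAt (gMid a)
      ((1 + 2 * (1 - a) * x / gMidDenom a x ^ 2) * -(x ^ (a - 1) * exp (-x))) x := by
    filter_upwards [eventually_ne_atTop 0, (tendsto_gMidDenom_atTop a).eventually_ne_atTop 0]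
      with x hx hD
    exact hasDerivAt_gMid hx hD
  have hincGamma : ∀ᶠ x in atTop, HasDerivAt (incGamma a) (-(x ^ (a - 1) * exp (-x))) x := by
    filter_upwards [eventually_gt_atTop 0] with x hx
    exact hasDerivAt_incGamma a hx
  have hne : ∀ᶠ x : ℝ in atTop, -(x ^ (a - 1) * exp (-x)) ≠ 0 := by
    filter_upwards [eventually_gt_atTop 0] with x hx
    exact neg_ne_zero.2 (by positivity)
  refine HasDerivAt.lhopital_zero_atTop hgMid hincGamma hne (tendsto_gMid_atTop a)
    (tendsto_incGamma_atTop a) (hfactor.congr' ?_)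
  filter_upwards [hne] with x hx
  exact (mul_div_cancel_right₀ _ hx).symm

end GMid

theorem stmt17 (a : ℝ) (ha : a < 0) :
    (∀ x : ℝ, 0 < x →
      incGamma a x < Real.exp (-x) * x ^ a * (1 - a + x) / ((x - a) ^ 2 - a + 2 * x) ∧
      Real.exp (-x) * x ^ a * (1 - a + x) / ((x - a) ^ 2 - a + 2 * x)
        < x ^ a * Real.exp (-x) / (x - a)) ∧
    Filter.Tendsto
      (fun x : ℝ =>
        Real.exp (-x) * x ^ a * (1 - a + x) / ((x - a) ^ 2 - a + 2 * x) / incGamma a x)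
      (nhdsWithin 0 (Set.Ioi 0)) (nhds 1) ∧
    Filter.Tendsto
      (fun x : ℝ =>
        Real.exp (-x) * x ^ a * (1 - a + x) / ((x - a) ^ 2 - a + 2 * x) / incGamma a x)
      Filter.atTop (nhds 1) := by
  refine ⟨fun x hx => ?_, tendsto_gMid_div_incGamma_nhdsGT_zero ha,
    tendsto_gMid_div_incGamma_atTop a⟩
  have hD : 0 < gMidDenom a x := gMidDenom_pos ha.le hx
  exact ⟨incGamma_lt_gMid (ha.trans one_pos) hx hD, gMid_lt_gHi hx (ha.trans hx) hD⟩
end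

section
/- With b_a defined for a > −1 (b_a := Γ(a+1)^(1/(a-1)) for a ≠ 1, b_1 := e^(1−γ)): if −1 < a < 2 then a < b_a < 2, and if a > 2 then 2 < b_a < a. -/
/-!
The function `log ∘ Γ` is strictly convex on `(0, ∞)`, so its difference quotient from any fixed
point, extended there by the derivative, is strictly increasing. Now `log b_a` is the difference
quotient of `log ∘ Γ` between `2` and `a + 1`, also for `a = 1`, because `(log ∘ Γ)'(2) = 1 - γ`.
Hence `b_a` is strictly increasing in `a`, and `b_2 = Γ(3) = 2` gives the comparison with `2`. For
`a > 0`, `log a` is the difference quotient between `a` and `a + 1`; moving the endpoint `a` to `2`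
with `a + 1` fixed turns it into `log b_a`, which gives the comparison with `a`.
-/

open Real Filter Set

theorem dslope_comm {𝕜 E : Type*} [NontriviallyNormedField 𝕜] [NormedAddCommGroup E]
    [NormedSpace 𝕜 E] (f : 𝕜 → E) (a b : 𝕜) : dslope f a b = dslope f b a := by
  rcases eq_or_ne a b with rfl | hab
  · rfl
  · rw [dslope_of_ne f hab.symm, dslope_of_ne f hab, slope_comm]

theorem strictMonoOn_dslope_of_strictConvexOn {s : Set ℝ} {f : ℝ → ℝ} {c : ℝ}
    (hf : StrictConvexOn ℝ s f) (hc : c ∈ s) (hd : DifferentiableAt ℝ f c) :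
    StrictMonoOn (dslope f c) s := by
  intro x hx y hy hxy
  rcases eq_or_ne x c with rfl | hxc
  · rw [dslope_same, dslope_of_ne f hxy.ne']
    exact hf.deriv_lt_slope hx hy hxy hd
  rcases eq_or_ne y c with rfl | hyc
  · rw [dslope_same, dslope_of_ne f hxc, slope_comm]
    exact hf.slope_lt_deriv hx hy hxy hd
  · rw [dslope_of_ne f hxc, dslope_of_ne f hyc, slope_def_field, slope_def_field]
    exact hf.secant_strict_mono hc hx hy hxc hyc hxy

theorem log_Gamma_add_one {x : ℝ} (hx : 0 < x) :
    log (Gamma (x + 1)) = log x + log (Gamma x) := by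
  rw [Gamma_add_one hx.ne', log_mul hx.ne' (Gamma_pos_of_pos hx).ne']

theorem differentiableAt_log_Gamma {x : ℝ} (hx : 0 < x) :
    DifferentiableAt ℝ (log ∘ Gamma) x :=
  (differentiableAt_Gamma fun m => ((neg_nonpos.mpr m.cast_nonneg).trans_lt hx).ne').log
    (Gamma_pos_of_pos hx).ne'

theorem deriv_log_Gamma_two : deriv (log ∘ Gamma) 2 = 1 - eulerMascheroniConstant := by
  have hΓ : HasDerivAt Gamma (1 - eulerMascheroniConstant) 2 := by
    simpa [one_add_one_eq_two, neg_add_eq_sub] using hasDerivAt_Gamma_nat 1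
  simpa [Function.comp_def] using (hΓ.log (by simp)).deriv

theorem strictConvexOn_log_Gamma : StrictConvexOn ℝ (Ioi 0) (log ∘ Gamma) := by
  have hshift : ConvexOn ℝ (Ioi 0) fun x : ℝ => log (Gamma (x + 1)) :=
    (convexOn_log_Gamma.translate_left 1).subset
      (fun x (hx : 0 < x) => show 0 < 1 + x by positivity) (convex_Ioi 0)
  -- The functional equation exhibits `log ∘ Γ` as the convex `log Γ(x + 1)` plus the strictly
  -- convex `-log x`.
  refine (hshift.add_strictConvexOn strictConcaveOn_log_Ioi.neg).congr fun x hx => ?_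
  simp [log_Gamma_add_one hx]

theorem strictMonoOn_dslope_log_Gamma {c : ℝ} (hc : 0 < c) :
    StrictMonoOn (dslope (log ∘ Gamma) c) (Ioi 0) :=
  strictMonoOn_dslope_of_strictConvexOn strictConvexOn_log_Gamma hc (differentiableAt_log_Gamma hc)

theorem log_eq_dslope_log_Gamma {a : ℝ} (ha : 0 < a) :
    log a = dslope (log ∘ Gamma) (a + 1) a := by
  rw [dslope_comm, dslope_of_ne _ (by simp), slope_def_field]
  simp [log_Gamma_add_one ha]

theorem bCoef_pos {a : ℝ} (ha : -1 < a) : 0 < bCoef a := by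
  rw [bCoef]
  split_ifs
  · exact exp_pos _
  · exact rpow_pos_of_pos (Gamma_pos_of_pos (by linarith)) _

theorem bCoef_two : bCoef 2 = 2 := by
  norm_num [bCoef, Gamma_ofNat_eq_factorial]

theorem log_bCoef {a : ℝ} (ha : -1 < a) :
    log (bCoef a) = dslope (log ∘ Gamma) 2 (a + 1) := by
  rcases eq_or_ne a 1 with rfl | h1
  · rw [bCoef, if_pos rfl, log_exp, one_add_one_eq_two, dslope_same, deriv_log_Gamma_two]
  · have h2 : a + 1 ≠ 2 := fun h => h1 (by linarith)
    have hsub : a + 1 - 2 = a - 1 := by ring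
    rw [bCoef, if_neg h1, log_rpow (Gamma_pos_of_pos (by linarith)), dslope_of_ne _ h2,
      slope_def_field, Function.comp_apply, Function.comp_apply, Gamma_two, log_one, hsub,
      sub_zero, one_div_mul_eq_div]

theorem strictMonoOn_bCoef : StrictMonoOn bCoef (Ioi (-1)) := by
  intro a ha b hb hab
  rw [← log_lt_log_iff (bCoef_pos ha) (bCoef_pos hb), log_bCoef ha, log_bCoef hb]
  exact strictMonoOn_dslope_log_Gamma two_pos (mem_Ioi.mpr (neg_lt_iff_pos_add.mp ha))
    (mem_Ioi.mpr (neg_lt_iff_pos_add.mp hb)) (by gcongr)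

theorem lt_bCoef_iff {a : ℝ} (ha : 0 < a) : a < bCoef a ↔ a < 2 := by
  have ha' : -1 < a := by linarith
  rw [← log_lt_log_iff ha (bCoef_pos ha'), log_bCoef ha', dslope_comm, log_eq_dslope_log_Gamma ha]
  exact (strictMonoOn_dslope_log_Gamma (by positivity)).lt_iff_lt ha (mem_Ioi.mpr two_pos)

theorem bCoef_lt_iff {a : ℝ} (ha : 0 < a) : bCoef a < a ↔ 2 < a := by
  have ha' : -1 < a := by linarith
  rw [← log_lt_log_iff (bCoef_pos ha') ha, log_bCoef ha', dslope_comm, log_eq_dslope_log_Gamma ha]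
  exact (strictMonoOn_dslope_log_Gamma (by positivity)).lt_iff_lt (mem_Ioi.mpr two_pos) ha

theorem stmt18 :
    (∀ a : ℝ, -1 < a → a < 2 → a < bCoef a ∧ bCoef a < 2) ∧
    (∀ a : ℝ, 2 < a → 2 < bCoef a ∧ bCoef a < a) := by
  have two_mem : (2 : ℝ) ∈ Ioi (-1) := by norm_num
  refine ⟨fun a ha ha2 => ⟨?_, ?_⟩, fun a ha2 => ⟨?_, ?_⟩⟩
  · rcases le_or_gt a 0 with h0 | h0
    · exact h0.trans_lt (bCoef_pos ha)
    · exact (lt_bCoef_iff h0).mpr ha2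
  · simpa only [bCoef_two] using strictMonoOn_bCoef ha two_mem ha2
  · simpa only [bCoef_two] using strictMonoOn_bCoef two_mem (two_mem.trans ha2) ha2
  · exact (bCoef_lt_iff (two_pos.trans ha2)).mpr ha2
end
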